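/- arXiv:2012.02150 — 2 statements merged into one kernel-verified Lean document; each statement's English description precedes it below -/
import Mathlib

section
/- Let p(z) = a_n z^n + ⋯ + a_1 z + 1 be a complex polynomial of degree n with constant term 1 and a_n ≠ 0, let ρ_min be the least of the moduli of the roots of p, and let b_k denote the coefficient of z^k in the Maclaurin series of 1/p(z) (equivalently, the k-th coefficient of the formal power series inverse of p). Then for every k ≥ 0, |b_k| ≤ ρ_min^{−k} · (k + n/2)^{n−1} / (n−1)!. -/
open Polynomial

/-- The minimum of the moduli of the roots of `p`. -/
noncomputable def rhoMin (p : Polynomial ℂ) : ℝ :=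
  sInf {x : ℝ | ∃ ρ : ℂ, p.eval ρ = 0 ∧ x = ‖ρ‖}

/-!
Since `p(z) = p(0) ∏ (1 - z / ρᵢ)`, the series `1 / p` is `p(0)⁻¹` times a product of `n` geometric
series in `z / ρᵢ`. If `r ≤ |ρᵢ|` for all `i`, each of them is majorized coefficientwise by the
geometric series in `z / r`, hence their product by `(1 - z / r)⁻ⁿ`, whose `k`-th coefficient is
`r⁻ᵏ` times the binomial coefficient `(k + 1) ⋯ (k + n - 1) / (n - 1)!`. The mean of the `n - 1`
factors in the numerator is `k + n / 2`, so AM-GM gives the bound.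
-/

/-- The real power series `F` is a majorant series of `f`: each coefficient of `f` is bounded in
norm by the corresponding coefficient of `F`. -/
def IsMajorizedBy {R : Type*} [SeminormedRing R] (f : PowerSeries R) (F : PowerSeries ℝ) : Prop :=
  ∀ k, ‖PowerSeries.coeff k f‖ ≤ PowerSeries.coeff k F

namespace IsMajorizedBy

open scoped PowerSeries

theorem mul {R : Type*} [SeminormedRing R] {f g : R⟦X⟧} {F G : ℝ⟦X⟧} (hf : IsMajorizedBy f F)
    (hg : IsMajorizedBy g G) : IsMajorizedBy (f * g) (F * G) := fun k => by
  simp only [PowerSeries.coeff_mul]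
  refine norm_sum_le_of_le _ fun ij _ => (norm_mul_le _ _).trans ?_
  exact mul_le_mul (hf _) (hg _) (norm_nonneg _) ((norm_nonneg _).trans (hf _))

variable {R : Type*} [SeminormedCommRing R] [NormOneClass R]

theorem one : IsMajorizedBy (1 : R⟦X⟧) 1 := fun k => by
  rcases eq_or_ne k 0 with rfl | hk <;> simp [PowerSeries.coeff_one, *]

theorem mk_one : IsMajorizedBy (PowerSeries.mk 1 : R⟦X⟧) (PowerSeries.mk 1) := fun k => by simp

theorem rescale {f : R⟦X⟧} {F : ℝ⟦X⟧} (hf : IsMajorizedBy f F) {a : R} {c : ℝ} (hac : ‖a‖ ≤ c) :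
    IsMajorizedBy (PowerSeries.rescale a f) (PowerSeries.rescale c F) := fun k => by
  simp only [PowerSeries.coeff_rescale]
  have hpow : ‖a ^ k‖ ≤ c ^ k := (norm_pow_le a k).trans (by gcongr)
  exact (norm_mul_le _ _).trans
    (mul_le_mul hpow (hf k) (norm_nonneg _) ((norm_nonneg _).trans hpow))

theorem multiset_prod_map {ι : Type*} {s : Multiset ι} {f : ι → R⟦X⟧} {F : ι → ℝ⟦X⟧}
    (h : ∀ i ∈ s, IsMajorizedBy (f i) (F i)) : IsMajorizedBy (s.map f).prod (s.map F).prod := by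
  induction s using Multiset.induction_on with
  | empty => simpa only [Multiset.map_zero, Multiset.prod_zero] using one
  | cons i s ih =>
    rw [Multiset.forall_mem_cons] at h
    simpa only [Multiset.map_cons, Multiset.prod_cons] using h.1.mul (ih h.2)

end IsMajorizedBy

section Inverse

variable {K : Type*} [Field K]

theorem inv_one_sub_C_mul_X (a : K) :
    (1 - PowerSeries.C a * PowerSeries.X : PowerSeries K)⁻¹ =
      PowerSeries.rescale a (PowerSeries.mk 1) := by
  rw [PowerSeries.inv_eq_iff_mul_eq_one (by simp), ← PowerSeries.rescale_X,
    ← map_one (PowerSeries.rescale a), ← map_sub, ← map_mul,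
    PowerSeries.mk_one_mul_one_sub_eq_one]

theorem inv_multiset_prod (s : Multiset (PowerSeries K)) : s.prod⁻¹ = (s.map (·⁻¹)).prod := by
  induction s using Multiset.induction_on with
  | empty => simp
  | cons f s ih => simp [ih, mul_comm]

theorem eq_C_coeff_zero_mul_prod_one_sub {p : K[X]} (hp : p.Splits) (h0 : p.coeff 0 ≠ 0) :
    p = C (p.coeff 0) * (p.roots.map fun a => 1 - C a⁻¹ * X).prod := by
  have hfactor : ∀ a ∈ p.roots, X - C a = C (-a) * (1 - C a⁻¹ * X) := fun a ha => by
    have ha0 : a ≠ 0 := by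
      rintro rfl
      exact h0 (coeff_zero_eq_eval_zero p ▸ (mem_roots'.mp ha).2)
    have hC : (C a * C a⁻¹ : K[X]) = 1 := by rw [← C_mul, mul_inv_cancel₀ ha0, C_1]
    rw [C_neg]
    linear_combination -X * hC
  obtain ⟨u, hu⟩ : ∃ u, p = C u * (p.roots.map fun a => 1 - C a⁻¹ * X).prod := by
    refine ⟨p.leadingCoeff * (p.roots.map fun a => -a).prod, ?_⟩
    conv_lhs => rw [hp.eq_prod_roots, Multiset.map_congr rfl hfactor, Multiset.prod_map_mul]
    simp only [C_mul, map_multiset_prod, Multiset.map_map, Function.comp_def, mul_assoc]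
  have hu0 : p.coeff 0 = u := by
    rw [hu]
    simp [coeff_zero_eq_eval_zero, eval_multiset_prod]
  rwa [hu0]

theorem coe_inv_eq_C_mul_prod_rescale {p : K[X]} (hp : p.Splits) (h0 : p.coeff 0 ≠ 0) :
    (p : PowerSeries K)⁻¹ = PowerSeries.C (p.coeff 0)⁻¹ *
      (p.roots.map fun a => PowerSeries.rescale a⁻¹ (PowerSeries.mk 1)).prod := by
  have hcoe : (p : PowerSeries K) = PowerSeries.C (p.coeff 0) *
      (p.roots.map fun a => 1 - PowerSeries.C a⁻¹ * PowerSeries.X).prod := by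
    conv_lhs => rw [eq_C_coeff_zero_mul_prod_one_sub hp h0, ← coeToPowerSeries.ringHom_apply]
    simp only [map_mul, map_multiset_prod, Multiset.map_map, Function.comp_def, map_sub, map_one,
      coeToPowerSeries.ringHom_apply, coe_C, coe_X]
  rw [hcoe, PowerSeries.mul_inv_rev, inv_multiset_prod, PowerSeries.C_inv, mul_comm,
    Multiset.map_map]
  simp [inv_one_sub_C_mul_X]

end Inverse

theorem norm_coeff_inv_le_choose {K : Type*} [NormedField K] {p : K[X]} (hp : p.Splits)
    (hdeg : 0 < p.natDegree) (h0 : p.coeff 0 ≠ 0) {c : ℝ} (hc : ∀ a ∈ p.roots, ‖a⁻¹‖ ≤ c) (k : ℕ) :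
    ‖PowerSeries.coeff k (p : PowerSeries K)⁻¹‖ ≤
      ‖p.coeff 0‖⁻¹ * (c ^ k * ((p.natDegree - 1 + k).choose (p.natDegree - 1) : ℝ)) := by
  have hmaj := IsMajorizedBy.multiset_prod_map fun a ha => IsMajorizedBy.mk_one.rescale (hc a ha)
  rw [Multiset.map_const', Multiset.prod_replicate, ← hp.natDegree_eq_card_roots, ← map_pow,
    ← Nat.sub_add_cancel hdeg, PowerSeries.mk_one_pow_eq_mk_choose_add] at hmaj
  rw [coe_inv_eq_C_mul_prod_rescale hp h0, PowerSeries.coeff_C_mul, norm_mul, norm_inv]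
  gcongr
  simpa using hmaj k

theorem prod_le_arith_mean_pow {ι : Type*} (s : Finset ι) {z : ι → ℝ} (hz : ∀ i ∈ s, 0 ≤ z i) :
    ∏ i ∈ s, z i ≤ ((∑ i ∈ s, z i) / s.card) ^ s.card := by
  rcases s.eq_empty_or_nonempty with rfl | hs
  · simp
  have hcard : 0 < s.card := hs.card_pos
  have hgeom := Real.geom_mean_le_arith_mean s 1 z (by simp) (by simpa using hs) hz
  simp only [Pi.one_apply, Real.rpow_one, one_mul, Finset.sum_const, nsmul_eq_mul, mul_one] at hgeom
  calc ∏ i ∈ s, z i = ((∏ i ∈ s, z i) ^ (s.card : ℝ)⁻¹) ^ s.card :=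
        (Real.rpow_inv_natCast_pow (Finset.prod_nonneg hz) hcard.ne').symm
    _ ≤ _ := by gcongr; exact Real.rpow_nonneg (Finset.prod_nonneg hz) _

theorem prod_range_add_natCast_le_pow {x : ℝ} (hx : 0 ≤ x) (m : ℕ) :
    ∏ i ∈ Finset.range m, (x + i) ≤ (x + (m - 1) / 2) ^ m := by
  rcases m.eq_zero_or_pos with rfl | hm
  · simp
  have hsum : ∑ i ∈ Finset.range m, (i : ℝ) = m * (m - 1) / 2 := by
    rw [eq_div_iff two_ne_zero, ← Nat.cast_pred hm]
    simpa using congrArg (Nat.cast (R := ℝ)) (Finset.sum_range_id_mul_two m)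
  have hmean : (∑ i ∈ Finset.range m, (x + i)) / m = x + (m - 1) / 2 := by
    rw [Finset.sum_add_distrib, hsum, Finset.sum_const, Finset.card_range, nsmul_eq_mul]
    field_simp
  simpa [hmean] using prod_le_arith_mean_pow (Finset.range m) (z := fun i => x + i)
    fun i _ => by positivity

theorem choose_add_le_pow_div_factorial (m k : ℕ) :
    ((m + k).choose m : ℝ) ≤ (k + (m + 1) / 2) ^ m / m.factorial := by
  rw [le_div_iff₀ (by positivity)]
  calc ((m + k).choose m : ℝ) * m.factorial
      = ((k + 1).ascFactorial m : ℕ) := by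
        rw [Nat.ascFactorial_eq_factorial_mul_choose, add_comm k, Nat.cast_mul, mul_comm]
    _ = ∏ i ∈ Finset.range m, ((k + 1 : ℝ) + i) := by simp [Nat.ascFactorial_eq_prod_range]
    _ ≤ ((k + 1 : ℝ) + (m - 1) / 2) ^ m := prod_range_add_natCast_le_pow (by positivity) m
    _ = (k + (m + 1) / 2) ^ m := by ring

section RhoMin

variable {p : ℂ[X]}

theorem finite_norm_roots (hp : p ≠ 0) : {x : ℝ | ∃ ρ : ℂ, p.eval ρ = 0 ∧ x = ‖ρ‖}.Finite := by
  refine ((p.rootSet_finite ℂ).image norm).subset ?_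
  rintro _ ⟨ρ, hρ, rfl⟩
  exact ⟨ρ, by simpa [mem_rootSet, hp] using hρ, rfl⟩

theorem rhoMin_le_norm {ρ : ℂ} (hρ : p.eval ρ = 0) : rhoMin p ≤ ‖ρ‖ :=
  csInf_le ⟨0, by rintro _ ⟨σ, -, rfl⟩; exact norm_nonneg σ⟩ ⟨ρ, hρ, rfl⟩

theorem exists_root_norm_eq_rhoMin (hdeg : 0 < p.natDegree) :
    ∃ ρ : ℂ, p.eval ρ = 0 ∧ rhoMin p = ‖ρ‖ := by
  obtain ⟨ρ, hρ⟩ := Complex.exists_root (natDegree_pos_iff_degree_pos.mp hdeg)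
  have hne : {x : ℝ | ∃ ρ : ℂ, p.eval ρ = 0 ∧ x = ‖ρ‖}.Nonempty := ⟨‖ρ‖, ρ, hρ, rfl⟩
  exact hne.csInf_mem (finite_norm_roots (ne_zero_of_natDegree_gt hdeg))

theorem rhoMin_pos (hdeg : 0 < p.natDegree) (h0 : p.coeff 0 ≠ 0) : 0 < rhoMin p := by
  obtain ⟨ρ, hρ, hmin⟩ := exists_root_norm_eq_rhoMin hdeg
  rw [hmin, norm_pos_iff]
  rintro rfl
  exact h0 (coeff_zero_eq_eval_zero p ▸ hρ)

end RhoMin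

theorem abs_inv_coeff_le_general {K : Type*} [NormedField K] {p : K[X]} (hp : p.Splits)
    (hdeg : 0 < p.natDegree) {r : ℝ} (hr : 0 < r) (hroot : ∀ a, p.eval a = 0 → r ≤ ‖a‖) (k : ℕ) :
    ‖PowerSeries.coeff k (p : PowerSeries K)⁻¹‖ ≤
      ‖p.coeff 0‖⁻¹ * (r⁻¹ ^ k * ((k : ℝ) + (p.natDegree : ℝ) / 2) ^ (p.natDegree - 1) /
        ((p.natDegree - 1).factorial : ℝ)) := by
  have h0 : p.coeff 0 ≠ 0 := fun h =>
    hr.not_ge (by simpa using hroot 0 (coeff_zero_eq_eval_zero p ▸ h))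
  have hinv : ∀ a ∈ p.roots, ‖a⁻¹‖ ≤ r⁻¹ := fun a ha => by
    rw [norm_inv]
    exact inv_anti₀ hr (hroot a (mem_roots'.mp ha).2)
  refine (norm_coeff_inv_le_choose hp hdeg h0 hinv k).trans ?_
  rw [mul_div_assoc]
  gcongr
  simpa [Nat.cast_pred hdeg] using choose_add_le_pow_div_factorial (p.natDegree - 1) k

/-- Theorem 3: if p has degree n, constant term 1, and b_k is the k-th
Maclaurin coefficient of 1/p (the k-th coefficient of the formal power series inverse of p),
then |b_k| ≤ ρ_min^(-k) · (k + n/2)^(n-1) / (n-1)!. -/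
theorem abs_inv_coeff_le
    (n : ℕ) (hn : 0 < n) (p : Polynomial ℂ) (hdeg : p.natDegree = n) (h0 : p.coeff 0 = 1)
    (k : ℕ) :
    ‖(PowerSeries.coeff k) ((p : PowerSeries ℂ))⁻¹‖ ≤
      (rhoMin p)⁻¹ ^ k * ((k : ℝ) + (n : ℝ) / 2) ^ (n - 1) / ((n - 1).factorial : ℝ) := by
  subst hdeg
  simpa [h0] using abs_inv_coeff_le_general (IsAlgClosed.splits p) hn (rhoMin_pos hn (by simp [h0]))
    (fun _ => rhoMin_le_norm) k
end

section
/- Let p(z) = a_n ∏_{i=1}^n (z − z_i) be a complex polynomial of degree n (with a_n ≠ 0), let k ≥ 0, and let z be a complex number with p(z) ≠ 0. Then the k-th derivative of 1/p at z equals ((−1)^k k! / p(z)) · Σ ∏_{i=1}^n (z − z_i)^{−k_i}, where the sum ranges over all n-tuples (k_1, …, k_n) of nonnegative integers with k_1 + ⋯ + k_n = k. -/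
open Polynomial

/-!
Up to the constant `a⁻¹`, the function `1 / p` is the product of the functions `x ↦ (x - z i)⁻¹`,
whose derivatives of order `m` are `(-1) ^ m * m! * (x - z i)⁻¹ ^ (m + 1)`. In the Leibniz rule for
a product of several functions, the factorials coming from these derivatives cancel the denominator
of each multinomial coefficient, so every tuple of orders with sum `k` contributes with the same
coefficient `(-1) ^ k * k!`.
-/

theorem sum_piAntidiag_cons {ι μ M : Type*} [DecidableEq ι] [AddCancelCommMonoid μ]
    [Finset.HasAntidiagonal μ] [DecidableEq μ] [AddCommMonoid M] {i : ι} {s : Finset ι}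
    (hi : i ∉ s) (n : μ) (F : (ι → μ) → M) :
    ∑ f ∈ (s.cons i hi).piAntidiag n, F f =
      ∑ q ∈ Finset.HasAntidiagonal.antidiagonal n,
        ∑ f ∈ s.piAntidiag q.2, F (Function.update f i q.1) := by
  rw [Finset.piAntidiag_cons hi, Finset.sum_disjiUnion]
  refine Finset.sum_congr rfl fun q _ ↦ ?_
  rw [Finset.sum_map]
  refine Finset.sum_congr rfl fun f hf ↦ congrArg F (funext fun j ↦ ?_)
  have hfi : f i = 0 := not_not.mp (mt ((Finset.mem_piAntidiag.mp hf).2 i) hi)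
  obtain rfl | hj := eq_or_ne j i
  · simp [hfi]
  · simp [hj]

theorem multinomial_cons_update {ι : Type*} [DecidableEq ι] {i : ι} {s : Finset ι} (hi : i ∉ s)
    (f : ι → ℕ) (m : ℕ) :
    Nat.multinomial (s.cons i hi) (Function.update f i m) =
      (m + ∑ j ∈ s, f j).choose m * Nat.multinomial s f := by
  have update_eq : ∀ j ∈ s, Function.update f i m j = f j := fun j hj ↦
    Function.update_of_ne (ne_of_mem_of_not_mem hj hi) m f
  rw [Nat.multinomial_cons, Function.update_self, Finset.sum_congr rfl update_eq,
    Nat.multinomial_congr update_eq]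

theorem iteratedDeriv_fun_prod {𝕜 𝔸 ι : Type*} [NontriviallyNormedField 𝕜] [NormedCommRing 𝔸]
    [NormedAlgebra 𝕜 𝔸] [DecidableEq ι] {s : Finset ι} {g : ι → 𝕜 → 𝔸} {k : ℕ} {x : 𝕜}
    (hg : ∀ i ∈ s, ContDiffAt 𝕜 k (g i) x) :
    iteratedDeriv k (fun y ↦ ∏ i ∈ s, g i y) x =
      ∑ f ∈ s.piAntidiag k, Nat.multinomial s f * ∏ i ∈ s, iteratedDeriv (f i) (g i) x := by
  induction s using Finset.cons_induction generalizing k with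
  | empty => cases k <;> simp [iteratedDeriv_const]
  | cons i s hi ih =>
    obtain ⟨hgi, hgs⟩ := (Finset.forall_mem_cons hi _).mp hg
    simp only [Finset.prod_cons]
    rw [iteratedDeriv_fun_mul hgi (contDiffAt_prod hgs), sum_piAntidiag_cons,
      ← Finset.Nat.sum_antidiagonal_eq_sum_range_succ fun l m ↦
        (k.choose l : 𝔸) * iteratedDeriv l (g i) x *
          iteratedDeriv m (fun y ↦ ∏ j ∈ s, g j y) x]
    refine Finset.sum_congr rfl fun q hq ↦ ?_
    have hqk : q.1 + q.2 = k := Finset.HasAntidiagonal.mem_antidiagonal.mp hq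
    have hq2 : (q.2 : WithTop ℕ∞) ≤ k := by exact_mod_cast hqk ▸ Nat.le_add_left q.2 q.1
    rw [ih fun j hj ↦ (hgs j hj).of_le hq2, Finset.mul_sum]
    refine Finset.sum_congr rfl fun f hf ↦ ?_
    have prod_update : ∏ j ∈ s, iteratedDeriv (Function.update f i q.1 j) (g j) x =
        ∏ j ∈ s, iteratedDeriv (f j) (g j) x :=
      Finset.prod_congr rfl fun j hj ↦ by
        rw [Function.update_of_ne (ne_of_mem_of_not_mem hj hi)]
    rw [multinomial_cons_update, (Finset.mem_piAntidiag.mp hf).1, hqk, Function.update_self,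
      prod_update]
    push_cast
    ring

section Field

variable {𝕜 : Type*} [NontriviallyNormedField 𝕜]

/-- At `x = c` both sides take the junk value `0`. -/
theorem iteratedDeriv_inv_sub_const (k : ℕ) (c x : 𝕜) :
    iteratedDeriv k (fun y ↦ (y - c)⁻¹) x =
      (-1) ^ k * (k.factorial : 𝕜) * ((x - c)⁻¹) ^ (k + 1) := by
  have zpow_eq : (x - c) ^ (-1 - k : ℤ) = ((x - c)⁻¹) ^ (k + 1) := by
    rw [← zpow_natCast, inv_zpow', Nat.cast_succ, neg_add']
    ring_nf
  simpa [iteratedDeriv_eq_iterate, zpow_eq] using congrFun (iter_deriv_inv_linear_sub k 1 c) x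

theorem iteratedDeriv_prod_inv_sub_const {ι : Type*} [DecidableEq ι] (s : Finset ι) (z : ι → 𝕜)
    (k : ℕ) {x : 𝕜} (hx : ∀ i ∈ s, x ≠ z i) :
    iteratedDeriv k (fun y ↦ ∏ i ∈ s, (y - z i)⁻¹) x =
      (-1) ^ k * (k.factorial : 𝕜) * (∏ i ∈ s, (x - z i)⁻¹) *
        ∑ f ∈ s.piAntidiag k, ∏ i ∈ s, ((x - z i)⁻¹) ^ f i := by
  have contDiffAt_factor : ∀ i ∈ s, ContDiffAt 𝕜 k (fun y ↦ (y - z i)⁻¹) x := fun i hi ↦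
    (contDiffAt_id.sub contDiffAt_const).inv (sub_ne_zero.mpr (hx i hi))
  rw [iteratedDeriv_fun_prod contDiffAt_factor, Finset.mul_sum]
  refine Finset.sum_congr rfl fun f hf ↦ ?_
  have hfk : ∑ i ∈ s, f i = k := (Finset.mem_piAntidiag.mp hf).1
  have factorial_eq : (k.factorial : 𝕜) =
      (∏ i ∈ s, ((f i).factorial : 𝕜)) * Nat.multinomial s f := by
    rw [← hfk, ← Nat.multinomial_spec]
    push_cast
    rfl
  simp only [iteratedDeriv_inv_sub_const, Finset.prod_mul_distrib, Finset.prod_pow_eq_pow_sum,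
    hfk, pow_succ, factorial_eq]
  ring

theorem iteratedDeriv_inv_eval_general {ι : Type*} [DecidableEq ι] (s : Finset ι) (a : 𝕜)
    (z : ι → 𝕜) (p : 𝕜[X]) (hp : p = C a * ∏ i ∈ s, (X - C (z i)))
    (k : ℕ) (w : 𝕜) (hw : p.eval w ≠ 0) :
    iteratedDeriv k (fun x ↦ (p.eval x)⁻¹) w =
      ((-1) ^ k * (k.factorial : 𝕜) / p.eval w) *
        ∑ f ∈ s.piAntidiag k, ∏ i ∈ s, ((w - z i)⁻¹) ^ f i := by
  have eval_eq (x : 𝕜) : p.eval x = a * ∏ i ∈ s, (x - z i) := by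
    simp [hp, eval_prod]
  have inv_eval_eq (x : 𝕜) : (p.eval x)⁻¹ = a⁻¹ * ∏ i ∈ s, (x - z i)⁻¹ := by
    rw [eval_eq, mul_inv, Finset.prod_inv_distrib]
  have w_ne_root : ∀ i ∈ s, w ≠ z i := by
    rw [eval_eq] at hw
    exact fun i hi ↦ sub_ne_zero.mp (Finset.prod_ne_zero_iff.mp (right_ne_zero_of_mul hw) i hi)
  simp only [div_eq_mul_inv, inv_eval_eq]
  rw [iteratedDeriv_const_mul_field, iteratedDeriv_prod_inv_sub_const s z k w_ne_root]
  ring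

end Field

/-- Leibniz-rule computation in Theorem 3: if
p(z) = a_n ∏ (z - z_i) and p(w) ≠ 0, then the k-th derivative of 1/p at w equals
((-1)^k k! / p(w)) · Σ_{k_1+⋯+k_n = k} ∏ (w - z_i)^(-k_i). -/
theorem iteratedDeriv_inv_eval
    (n : ℕ) (a : ℂ) (ha : a ≠ 0) (z : Fin n → ℂ) (p : Polynomial ℂ)
    (hp : p = Polynomial.C a * ∏ i, (Polynomial.X - Polynomial.C (z i)))
    (k : ℕ) (w : ℂ) (hw : p.eval w ≠ 0) :
    iteratedDeriv k (fun x : ℂ => (p.eval x)⁻¹) w =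
      ((-1) ^ k * (k.factorial : ℂ) / p.eval w) *
        ∑ f ∈ Finset.Nat.antidiagonalTuple n k, ∏ i, ((w - z i)⁻¹) ^ (f i) := by
  rw [← Finset.piAntidiag_univ_fin_eq_antidiagonalTuple]
  exact iteratedDeriv_inv_eval_general Finset.univ a z p hp k w hw
end
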